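/- arXiv:2006.15355 — 3 statements merged into one kernel-verified Lean document; each statement's English description precedes it below -/
import Mathlib

section
/- Let A be an alphabet with at least two letters. For every y, z ∈ nA* with y ≠ z, there exists v ∈ nA* such that the join yv ∨ z does not exist, or the join y ∨ zv does not exist. -/
open Stream'

variable {A : Type*} {n : ℕ}

/-- The initial-factor order `u ≤_init v` on `n`-tuples of strings:
`u i` is a prefix of `v i` for every coordinate `i`. -/
def initLE (u v : Fin n → List A) : Prop := ∀ i, u i <+: v i

/-- `w` is the join (least upper bound w.r.t. `initLE`) of `u` and `v`. -/
def IsJoin (u v w : Fin n → List A) : Prop :=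
  initLE u w ∧ initLE v w ∧ ∀ z, initLE u z → initLE v z → initLE w z

/-- The join of `u` and `v` exists. -/
def JoinEx (u v : Fin n → List A) : Prop := ∃ w, IsJoin u v w

/-- The set join `X ∨ Y = {x ∨ y : x ∈ X, y ∈ Y, x ∨ y exists}`. -/
def setJoin (X Y : Set (Fin n → List A)) : Set (Fin n → List A) :=
  {w | ∃ x ∈ X, ∃ y ∈ Y, IsJoin x y w}

/-- A joinless code: no two distinct elements have a join. -/
def Joinless (S : Set (Fin n → List A)) : Prop :=
  ∀ x ∈ S, ∀ y ∈ S, x ≠ y → ¬ JoinEx x y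

/-- A maximal joinless code. -/
def MaxJoinless (S : Set (Fin n → List A)) : Prop :=
  Joinless S ∧ ∀ T : Set (Fin n → List A), Joinless T → S ⊆ T → S = T

/-- Coordinatewise concatenation in `nA*`. -/
def cat (x v : Fin n → List A) : Fin n → List A := fun i => x i ++ v i

/-- The right ideal `S·nA*` generated by `S`. -/
def rIdeal (S : Set (Fin n → List A)) : Set (Fin n → List A) :=
  {w | ∃ s ∈ S, ∃ v, w = cat s v}

/-- Coordinatewise concatenation of a tuple of finite strings
with a tuple of right-infinite words. -/
def catOmega (x : Fin n → List A) (w : Fin n → Stream' A) : Fin n → Stream' A :=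
  fun i => x i ++ₛ w i

/-- `S·nA^ω`. -/
def omegaIdeal (S : Set (Fin n → List A)) : Set (Fin n → Stream' A) :=
  {w | ∃ s ∈ S, ∃ u, w = catOmega s u}

/-- `P ≡_fin Q`: the symmetric difference of the generated right ideals is finite. -/
def equivFin (P Q : Set (Fin n → List A)) : Prop :=
  (symmDiff (rIdeal P) (rIdeal Q)).Finite

/-- `maxlen(S)`: the maximum coordinate length over a (finite nonempty) set. -/
noncomputable def maxlen (S : Set (Fin n → List A)) : ℕ :=
  sSup {m | ∃ x ∈ S, ∃ i, (x i).length = m}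

/-! If `y v` and `z` have a join for every `v`, then `z ≤_init y`: of two words `y i ++ [a]` and
`y i ++ [b]` with `a ≠ b`, at least one is not a prefix of `z i`, so comparability makes `z i` a
proper prefix of it, hence a prefix of `y i`. When all the joins `y v ∨ z` and `y ∨ z v` exist,
antisymmetry of `≤_init` gives `y = z`. -/

theorem initLE_antisymm {u v : Fin n → List A} (huv : initLE u v) (hvu : initLE v u) : u = v :=
  funext fun i ↦ (huv i).eq_of_length_le (hvu i).length_le

theorem JoinEx.symm {u v : Fin n → List A} : JoinEx u v → JoinEx v u := by
  rintro ⟨w, huw, hvw, hw⟩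
  exact ⟨w, hvw, huw, fun z hvz huz ↦ hw z huz hvz⟩

theorem JoinEx.prefix_or_prefix {u v : Fin n → List A} (h : JoinEx u v) (i : Fin n) :
    u i <+: v i ∨ v i <+: u i := by
  obtain ⟨w, huw, hvw, -⟩ := h
  exact List.prefix_or_prefix_of_prefix (huw i) (hvw i)

theorem prefix_of_forall_append_singleton_comparable [Nontrivial A] {x w : List A}
    (h : ∀ a, x ++ [a] <+: w ∨ w <+: x ++ [a]) : w <+: x := by
  have prefix_of_not_prefix {a : A} (ha : ¬ x ++ [a] <+: w) : w <+: x := by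
    rcases List.prefix_concat_iff.mp ((h a).resolve_left ha) with rfl | hwx
    · exact absurd List.prefix_rfl ha
    · exact hwx
  obtain ⟨a, b, hab⟩ := exists_pair_ne A
  by_cases ha : x ++ [a] <+: w
  · obtain ⟨t, rfl⟩ := ha
    refine prefix_of_not_prefix (a := b) fun hb ↦ hab ?_
    simpa [eq_comm] using hb
  · exact prefix_of_not_prefix ha

theorem initLE_of_forall_joinEx_cat [Nontrivial A] {y z : Fin n → List A}
    (h : ∀ v, JoinEx (cat y v) z) : initLE z y :=
  fun i ↦ prefix_of_forall_append_singleton_comparable fun a ↦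
    (h fun _ ↦ [a]).prefix_or_prefix i

theorem stmt_2_general [Nontrivial A] {y z : Fin n → List A} (hyz : y ≠ z) :
    ∃ v : Fin n → List A, ¬ JoinEx (cat y v) z ∨ ¬ JoinEx y (cat z v) := by
  by_contra! h
  have hzy_le : initLE z y := initLE_of_forall_joinEx_cat fun v ↦ (h v).1
  have hyz_le : initLE y z := initLE_of_forall_joinEx_cat fun v ↦ (h v).2.symm
  exact hyz (initLE_antisymm hyz_le hzy_le)

/-- For `y ≠ z` in `nA*` (with `|A| ≥ 2`) there is `v` such that `yv ∨ z` does not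
exist or `y ∨ zv` does not exist. -/
theorem stmt_2 [Fintype A] (hA : 2 ≤ Fintype.card A) (hn : 1 ≤ n)
    (y z : Fin n → List A) (hyz : y ≠ z) :
    ∃ v : Fin n → List A, ¬ JoinEx (cat y v) z ∨ ¬ JoinEx y (cat z v) := by
  have : Nontrivial A := Fintype.one_lt_card_iff_nontrivial.mp hA
  exact stmt_2_general hyz
end

section
/- For any sets X, Y ⊆ nA*: (1) X·nA* ∩ Y·nA* = (X ∨ Y)·nA*, and X·nA^ω ∩ Y·nA^ω = (X ∨ Y)·nA^ω; (2) if X and Y are finite then the right ideal X·nA* ∩ Y·nA* is generated by a finite set; (3) if X and Y are joinless codes then X ∨ Y is a joinless code generating X·nA* ∩ Y·nA*. -/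
open Stream'

variable {A : Type*} {n : ℕ}

/-!
Two initial factors of one word are comparable, so two tuples with a common upper bound have a join,
namely the longer factor in each coordinate. Hence `x` and `y` both lie below `w` exactly when their
join exists and lies below `w`. For a tuple `w` of infinite words, the common upper bound is a
sufficiently long truncation of `w`.
-/

section

variable {x y z j k : Fin n → List A} {w : Fin n → Stream' A} {S X Y : Set (Fin n → List A)}

theorem initLE.trans (hxy : initLE x y) (hyz : initLE y z) : initLE x z :=
  fun i => (hxy i).trans (hyz i)

theorem initLE.antisymm (hxy : initLE x y) (hyx : initLE y x) : x = y :=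
  funext fun i => _root_.antisymm (hxy i) (hyx i)

theorem IsJoin.initLE_iff (hj : IsJoin x y j) : initLE j z ↔ initLE x z ∧ initLE y z :=
  ⟨fun hz => ⟨hj.1.trans hz, hj.2.1.trans hz⟩, fun hz => hj.2.2 z hz.1 hz.2⟩

theorem IsJoin.unique (hj : IsJoin x y j) (hk : IsJoin x y k) : j = k :=
  (hj.2.2 k hk.1 hk.2.1).antisymm (hk.2.2 j hj.1 hj.2.1)

theorem joinEx_iff_exists_initLE : JoinEx x y ↔ ∃ z, initLE x z ∧ initLE y z := by
  refine ⟨fun ⟨j, hj⟩ => ⟨j, hj.1, hj.2.1⟩, fun ⟨z, hxz, hyz⟩ => ?_⟩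
  have exists_lub (i : Fin n) :
      ∃ l, x i <+: l ∧ y i <+: l ∧ ∀ m, x i <+: m → y i <+: m → l <+: m := by
    rcases List.prefix_or_prefix_of_prefix (hxz i) (hyz i) with hxy | hyx
    · exact ⟨y i, hxy, List.prefix_rfl, fun _ _ hy => hy⟩
    · exact ⟨x i, List.prefix_rfl, hyx, fun _ hx _ => hx⟩
  choose j hxj hyj hj using exists_lub
  exact ⟨j, hxj, hyj, fun z hx hy i => hj i (z i) (hx i) (hy i)⟩

/-- `x` is an initial factor of the tuple `w` of infinite words, that is, `w ∈ x·nA^ω`. This is the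
analogue of `initLE` with an infinite right-hand side. -/
def initLEOmega (x : Fin n → List A) (w : Fin n → Stream' A) : Prop :=
  ∃ u, w = catOmega x u

/-- The tuple of initial factors of `w` of lengths `k i`. It is used to bound finite initial factors
of `w` by a single element of `nA*`. -/
def truncate (k : Fin n → ℕ) (w : Fin n → Stream' A) : Fin n → List A :=
  fun i => (w i).take (k i)

theorem initLE.trans_initLEOmega (hxy : initLE x y) (hyw : initLEOmega y w) : initLEOmega x w := by
  obtain ⟨u, rfl⟩ := hyw
  choose v hv using hxy
  refine ⟨catOmega v u, funext fun i => ?_⟩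
  simp only [catOmega, ← hv i, append_append_stream]

theorem initLEOmega_truncate (k : Fin n → ℕ) (w : Fin n → Stream' A) :
    initLEOmega (truncate k w) w :=
  ⟨fun i => (w i).drop (k i), funext fun i => (append_take_drop (k i) (w i)).symm⟩

theorem initLEOmega.initLE_truncate {k : Fin n → ℕ}
    (hxw : initLEOmega x w) (hk : ∀ i, (x i).length ≤ k i) : initLE x (truncate k w) := by
  obtain ⟨u, rfl⟩ := hxw
  intro i
  obtain ⟨m, hm⟩ := Nat.exists_eq_add_of_le (hk i)
  refine ⟨(u i).take m, ?_⟩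
  simp only [truncate, catOmega, hm, append_take]

theorem initLEOmega.exists_initLE (hxw : initLEOmega x w) (hyw : initLEOmega y w) :
    ∃ z, initLE x z ∧ initLE y z ∧ initLEOmega z w :=
  let k i := max (x i).length (y i).length
  ⟨truncate k w, hxw.initLE_truncate fun _ => le_max_left _ _,
    hyw.initLE_truncate fun _ => le_max_right _ _, initLEOmega_truncate k w⟩

theorem IsJoin.initLEOmega_iff (hj : IsJoin x y j) :
    initLEOmega j w ↔ initLEOmega x w ∧ initLEOmega y w := by
  refine ⟨fun hw => ⟨hj.1.trans_initLEOmega hw, hj.2.1.trans_initLEOmega hw⟩, fun ⟨hx, hy⟩ => ?_⟩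
  obtain ⟨z, hxz, hyz, hzw⟩ := hx.exists_initLE hy
  exact (hj.2.2 z hxz hyz).trans_initLEOmega hzw

theorem mem_rIdeal {w : Fin n → List A} : w ∈ rIdeal S ↔ ∃ s ∈ S, initLE s w := by
  constructor
  · rintro ⟨s, hs, v, rfl⟩
    exact ⟨s, hs, fun i => List.prefix_append _ _⟩
  · rintro ⟨s, hs, hsw⟩
    choose v hv using hsw
    exact ⟨s, hs, v, funext fun i => (hv i).symm⟩

theorem mem_omegaIdeal : w ∈ omegaIdeal S ↔ ∃ s ∈ S, initLEOmega s w :=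
  Iff.rfl

theorem rIdeal_inter_rIdeal (X Y : Set (Fin n → List A)) :
    rIdeal X ∩ rIdeal Y = rIdeal (setJoin X Y) := by
  ext w
  simp only [Set.mem_inter_iff, mem_rIdeal]
  constructor
  · rintro ⟨⟨x, hx, hxw⟩, y, hy, hyw⟩
    obtain ⟨j, hj⟩ := joinEx_iff_exists_initLE.2 ⟨w, hxw, hyw⟩
    exact ⟨j, ⟨x, hx, y, hy, hj⟩, hj.initLE_iff.2 ⟨hxw, hyw⟩⟩
  · rintro ⟨j, ⟨x, hx, y, hy, hj⟩, hjw⟩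
    obtain ⟨hxw, hyw⟩ := hj.initLE_iff.1 hjw
    exact ⟨⟨x, hx, hxw⟩, y, hy, hyw⟩

theorem omegaIdeal_inter_omegaIdeal (X Y : Set (Fin n → List A)) :
    omegaIdeal X ∩ omegaIdeal Y = omegaIdeal (setJoin X Y) := by
  ext w
  simp only [Set.mem_inter_iff, mem_omegaIdeal]
  constructor
  · rintro ⟨⟨x, hx, hxw⟩, y, hy, hyw⟩
    obtain ⟨z, hxz, hyz, -⟩ := hxw.exists_initLE hyw
    obtain ⟨j, hj⟩ := joinEx_iff_exists_initLE.2 ⟨z, hxz, hyz⟩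
    exact ⟨j, ⟨x, hx, y, hy, hj⟩, hj.initLEOmega_iff.2 ⟨hxw, hyw⟩⟩
  · rintro ⟨j, ⟨x, hx, y, hy, hj⟩, hjw⟩
    obtain ⟨hxw, hyw⟩ := hj.initLEOmega_iff.1 hjw
    exact ⟨⟨x, hx, hxw⟩, y, hy, hyw⟩

theorem finite_setJoin (hX : X.Finite) (hY : Y.Finite) : (setJoin X Y).Finite := by
  have setJoin_eq : setJoin X Y = ⋃ x ∈ X, ⋃ y ∈ Y, {j | IsJoin x y j} := by
    ext j
    simp only [setJoin, Set.mem_ofPred_eq, Set.mem_iUnion, exists_prop]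
  have finite_joins (x y : Fin n → List A) : {j | IsJoin x y j}.Finite :=
    Set.Subsingleton.finite fun _ hj _ hk => hj.unique hk
  rw [setJoin_eq]
  exact hX.biUnion fun x _ => hY.biUnion fun y _ => finite_joins x y

theorem Joinless.eq_of_initLE (hS : Joinless S) (hx : x ∈ S) (hy : y ∈ S) (hxz : initLE x z)
    (hyz : initLE y z) : x = y := by
  by_contra hne
  exact hS x hx y hy hne (joinEx_iff_exists_initLE.2 ⟨z, hxz, hyz⟩)

theorem Joinless.setJoin (hX : Joinless X) (hY : Joinless Y) : Joinless (setJoin X Y) := by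
  rintro j ⟨x, hx, y, hy, hj⟩ k ⟨x', hx', y', hy', hk⟩ hjk hex
  obtain ⟨z, hjz, hkz⟩ := joinEx_iff_exists_initLE.1 hex
  obtain ⟨hxz, hyz⟩ := hj.initLE_iff.1 hjz
  obtain ⟨hxz', hyz'⟩ := hk.initLE_iff.1 hkz
  obtain rfl : x = x' := hX.eq_of_initLE hx hx' hxz hxz'
  obtain rfl : y = y' := hY.eq_of_initLE hy hy' hyz hyz'
  exact hjk (hj.unique hk)

end

theorem stmt_3_general (X Y : Set (Fin n → List A)) :
    (rIdeal X ∩ rIdeal Y = rIdeal (setJoin X Y) ∧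
      omegaIdeal X ∩ omegaIdeal Y = omegaIdeal (setJoin X Y)) ∧
    (X.Finite → Y.Finite →
      ∃ G : Set (Fin n → List A), G.Finite ∧ rIdeal X ∩ rIdeal Y = rIdeal G) ∧
    (Joinless X → Joinless Y →
      Joinless (setJoin X Y) ∧ rIdeal X ∩ rIdeal Y = rIdeal (setJoin X Y)) :=
  ⟨⟨rIdeal_inter_rIdeal X Y, omegaIdeal_inter_omegaIdeal X Y⟩,
    fun hX hY => ⟨setJoin X Y, finite_setJoin hX hY, rIdeal_inter_rIdeal X Y⟩,
    fun hX hY => ⟨hX.setJoin hY, rIdeal_inter_rIdeal X Y⟩⟩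

/-- Set joins and intersections of right ideals. -/
theorem stmt_3 [Fintype A] [Nonempty A] (hn : 1 ≤ n) (X Y : Set (Fin n → List A)) :
    (rIdeal X ∩ rIdeal Y = rIdeal (setJoin X Y) ∧
      omegaIdeal X ∩ omegaIdeal Y = omegaIdeal (setJoin X Y)) ∧
    (X.Finite → Y.Finite →
      ∃ G : Set (Fin n → List A), G.Finite ∧ rIdeal X ∩ rIdeal Y = rIdeal G) ∧
    (Joinless X → Joinless Y →
      Joinless (setJoin X Y) ∧ rIdeal X ∩ rIdeal Y = rIdeal (setJoin X Y)) :=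
  stmt_3_general X Y
end

section
/- For all n ≥ 1 and k ≥ 2, the monoid nM_{k,1} is regular: for every Φ ∈ nM_{k,1} there exists Φ' ∈ nM_{k,1} such that Φ ∘ Φ' ∘ Φ = Φ (as partial maps of nA_k^ω). -/
open Stream'

variable {A : Type*} {n : ℕ}

/-- A right-ideal morphism of `nA*`, as a partial function:
if `f x = y` then `f (xv) = yv` (in particular the domain is a right ideal). -/
def IsRIM (f : (Fin n → List A) →. (Fin n → List A)) : Prop :=
  ∀ x y, y ∈ f x → ∀ v, cat y v ∈ f (cat x v)

/-- The domain code `domC f`: the `initLE`-minimal elements of `Dom f`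
(the unique initial-factor code generating the right ideal `Dom f`). -/
def domC (f : (Fin n → List A) →. (Fin n → List A)) : Set (Fin n → List A) :=
  {x ∈ f.Dom | ∀ y ∈ f.Dom, initLE y x → y = x}

/-- The image code `imC f`: the `initLE`-minimal elements of `Im f`
(the unique initial-factor code generating the right ideal `Im f`). -/
def imC (f : (Fin n → List A) →. (Fin n → List A)) : Set (Fin n → List A) :=
  {y ∈ f.ran | ∀ z ∈ f.ran, initLE z y → z = y}

/-- An initial-factor code: an antichain for the strict initial-factor order. -/
def InitCode (S : Set (Fin n → List A)) : Prop :=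
  ∀ x ∈ S, ∀ y ∈ S, initLE x y → x = y

/-- `maxlen` of a right-ideal morphism: `maxlen(domC(f) ∪ f(domC(f)))`. -/
noncomputable def maxlenM (f : (Fin n → List A) →. (Fin n → List A)) : ℕ :=
  maxlen (domC f ∪ f.image (domC f))

/-- `Φ` (a partial map of `nA^ω`) is the extension to `nA^ω` of the right-ideal
morphism `f` of `nA*`. -/
def IsExt (f : (Fin n → List A) →. (Fin n → List A))
    (Φ : (Fin n → Stream' A) →. (Fin n → Stream' A)) : Prop :=
  Φ.Dom = omegaIdeal (domC f) ∧
  ∀ p ∈ domC f, ∀ u : Fin n → Stream' A, ∀ y ∈ f p,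
    catOmega y u ∈ Φ (catOmega p u)

/-- Membership in the monoid `nM_{k,1}`: `Φ` is the extension to `nA^ω` of some
right-ideal morphism of `nA*` whose domain code is finite and joinless. -/
def InNM (Φ : (Fin n → Stream' A) →. (Fin n → Stream' A)) : Prop :=
  ∃ f : (Fin n → List A) →. (Fin n → List A),
    IsRIM f ∧ (domC f).Finite ∧ Joinless (domC f) ∧ IsExt f Φ

/-!
Let `f` be a right-ideal morphism inducing `Φ`, and choose `N` bounding the coordinate lengths of
the words in `f (domC f)`. Then every point of the image of `Φ` starts with some `y` in the image
of `f` all of whose coordinates have length exactly `N`. These `y` form a joinless code, finite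
because the alphabet is, and any table on a joinless code defines a right-ideal morphism. Sending
each such `y` to a preimage `x` with `f x = y` therefore gives an element `Φ'` of the monoid, and
`Φ` maps `Φ' (y u) = x u` back to `y u`.
-/

section PartialFunctions

variable {α β : Type*}

theorem exists_pfun_mem_iff {r : α → β → Prop} (hr : Relator.RightUnique r) :
    ∃ f : α →. β, ∀ x y, y ∈ f x ↔ r x y := by
  refine ⟨fun x => ⟨∃ y, r x y, Exists.choose⟩, fun x y => ?_⟩
  constructor
  · rintro ⟨h, rfl⟩
    exact h.choose_spec
  · exact fun h => ⟨⟨y, h⟩, hr (Exists.choose_spec ⟨y, h⟩) h⟩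

theorem finite_pfun_image (f : α →. β) {s : Set α} (hs : s.Finite) : (f.image s).Finite := by
  have image_eq : f.image s = ⋃ x ∈ s, {y | y ∈ f x} := by
    ext y
    simp only [PFun.mem_image, Set.mem_iUnion, Set.mem_ofPred_eq, exists_prop]
  rw [image_eq]
  exact hs.biUnion fun x _ =>
    Set.Subsingleton.finite fun _ hy _ hz => Part.mem_unique hy hz

theorem mem_pfun_comp_iff {γ : Type*} {f : β →. γ} {g : α →. β} {a : α} {c : γ} :
    c ∈ f.comp g a ↔ ∃ b ∈ g a, c ∈ f b :=
  Part.mem_bind_iff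

theorem pfun_comp_comp_eq_self {f : α →. β} {g : β →. α}
    (h : ∀ y ∈ f.ran, ∃ x ∈ g y, y ∈ f x) : f.comp (g.comp f) = f := by
  refine PFun.ext fun a z => ?_
  simp only [mem_pfun_comp_iff]
  constructor
  · rintro ⟨x, ⟨y, hy, hx⟩, hz⟩
    obtain ⟨x', hx', hyx'⟩ := h y ⟨a, hy⟩
    obtain rfl := Part.mem_unique hx hx'
    obtain rfl := Part.mem_unique hz hyx'
    exact hy
  · intro hz
    obtain ⟨x, hx, hzx⟩ := h z ⟨a, hz⟩
    exact ⟨x, ⟨z, hz, hx⟩, hzx⟩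

end PartialFunctions

section Words

theorem cat_nil (x : Fin n → List A) : cat x (fun _ => []) = x :=
  funext fun _ => List.append_nil _

theorem cat_assoc (x v w : Fin n → List A) : cat (cat x v) w = cat x (cat v w) :=
  funext fun _ => List.append_assoc _ _ _

theorem catOmega_cat (x v : Fin n → List A) (u : Fin n → Stream' A) :
    catOmega (cat x v) u = catOmega x (catOmega v u) :=
  funext fun _ => Stream'.append_append_stream _ _ _

theorem cat_right_injective (x : Fin n → List A) : Function.Injective (cat x) :=
  fun _ _ h => funext fun i => List.append_cancel_left (congrFun h i)

theorem catOmega_right_injective (x : Fin n → List A) : Function.Injective (catOmega x) :=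
  fun _ _ h => funext fun i => Stream'.append_right_injective _ _ _ (congrFun h i)

theorem initLE_cat (x v : Fin n → List A) : initLE x (cat x v) :=
  fun _ => List.prefix_append _ _

theorem initLE.exists_eq_cat {x y : Fin n → List A} (h : initLE x y) : ∃ v, y = cat x v := by
  choose v hv using h
  exact ⟨v, funext fun i => (hv i).symm⟩

theorem exists_forall_length_le {S : Set (Fin n → List A)} (hS : S.Finite) :
    ∃ N : ℕ, ∀ y ∈ S, ∀ i, (y i).length ≤ N := by
  obtain ⟨N, hN⟩ := (hS.image2 (fun y i => (y i).length) Set.finite_univ).bddAbove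
  exact ⟨N, fun y hy i => hN (Set.mem_image2_of_mem hy (Set.mem_univ i))⟩

theorem finite_setOf_forall_length_eq [Finite A] (N : ℕ) :
    {y : Fin n → List A | ∀ i, (y i).length = N}.Finite :=
  Set.Finite.pi' fun _ => List.finite_length_eq A N

theorem exists_catOmega_eq_of_length_le {N : ℕ} {q : Fin n → List A}
    (hq : ∀ i, (q i).length ≤ N) (u : Fin n → Stream' A) :
    ∃ v u', (∀ i, (cat q v i).length = N) ∧ catOmega (cat q v) u' = catOmega q u := by
  refine ⟨fun i => (u i).take (N - (q i).length), fun i => (u i).drop (N - (q i).length),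
    fun i => ?_, ?_⟩
  · simp only [cat, List.length_append, Stream'.length_take, Nat.add_sub_cancel' (hq i)]
  · rw [catOmega_cat]
    exact congrArg (catOmega q) (funext fun i => Stream'.append_take_drop _ _)

end Words

section Joins

theorem joinEx_of_prefix_or_prefix {u v : Fin n → List A}
    (h : ∀ i, u i <+: v i ∨ v i <+: u i) : JoinEx u v := by
  have coordinate_join : ∀ i, ∃ w, u i <+: w ∧ v i <+: w ∧
      ∀ z, u i <+: z → v i <+: z → w <+: z := fun i =>
    (h i).elim (fun huv => ⟨v i, huv, List.prefix_rfl, fun _ _ hv => hv⟩)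
      (fun hvu => ⟨u i, List.prefix_rfl, hvu, fun _ hu _ => hu⟩)
  choose w hu hv hmin using coordinate_join
  exact ⟨w, hu, hv, fun z huz hvz i => hmin i _ (huz i) (hvz i)⟩

theorem joinEx_of_initLE {u v w : Fin n → List A} (hu : initLE u w) (hv : initLE v w) :
    JoinEx u v :=
  joinEx_of_prefix_or_prefix fun i => List.prefix_or_prefix_of_prefix (hu i) (hv i)

theorem prefix_of_appendStream_eq {s t : List A} {a b : Stream' A} (h : s ++ₛ a = t ++ₛ b)
    (hlen : s.length ≤ t.length) : s <+: t := by
  have hs : s = t.take s.length := by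
    rw [← Stream'.take_append_of_le_length _ t b hlen, ← h,
      Stream'.take_append_of_le_length _ s a le_rfl, List.take_length]
  exact hs ▸ List.take_prefix _ _

theorem joinEx_of_catOmega_eq {s t : Fin n → List A} {u v : Fin n → Stream' A}
    (h : catOmega s u = catOmega t v) : JoinEx s t :=
  joinEx_of_prefix_or_prefix fun i =>
    (le_total (s i).length (t i).length).imp
      (prefix_of_appendStream_eq (congrFun h i)) (prefix_of_appendStream_eq (congrFun h i).symm)

theorem Joinless.eq_of_joinEx {C : Set (Fin n → List A)} (hC : Joinless C)
    {s t : Fin n → List A} (hs : s ∈ C) (ht : t ∈ C) (h : JoinEx s t) : s = t :=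
  by_contra fun hne => hC s hs t ht hne h

theorem Joinless.initCode {C : Set (Fin n → List A)} (hC : Joinless C) : InitCode C :=
  fun _ hs _ ht hst => hC.eq_of_joinEx hs ht (joinEx_of_initLE hst fun _ => List.prefix_rfl)

theorem joinless_of_forall_length_eq {C : Set (Fin n → List A)} {N : ℕ}
    (hC : ∀ y ∈ C, ∀ i, (y i).length = N) : Joinless C := by
  rintro s hs t ht hne ⟨w, hsw, htw, -⟩
  refine hne (funext fun i => ?_)
  have hlen : (s i).length = (t i).length := (hC s hs i).trans (hC t ht i).symm
  exact (List.prefix_of_prefix_length_le (hsw i) (htw i) hlen.le).eq_of_length hlen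

end Joins

section RightIdealMorphisms

variable {C : Set (Fin n → List A)} {f : (Fin n → List A) →. (Fin n → List A)}

theorem dom_subset_rIdeal_domC (f : (Fin n → List A) →. (Fin n → List A)) :
    f.Dom ⊆ rIdeal (domC f) := by
  intro x hx
  obtain ⟨p, ⟨hp, hpx⟩, hmin⟩ := exists_minimalFor_of_wellFoundedLT
    (fun y => y ∈ f.Dom ∧ initLE y x) (fun y => ∑ i, (y i).length) ⟨x, hx, fun _ => List.prefix_rfl⟩
  obtain ⟨v, rfl⟩ := hpx.exists_eq_cat
  refine ⟨p, ⟨hp, fun y hy hyp => ?_⟩, v, rfl⟩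
  have total_length_le : ∑ i, (p i).length ≤ ∑ i, (y i).length :=
    hmin ⟨hy, fun i => (hyp i).trans (hpx i)⟩ (Finset.sum_le_sum fun i _ => (hyp i).length_le)
  have length_eq : ∀ i ∈ Finset.univ, (y i).length = (p i).length :=
    (Finset.sum_eq_sum_iff_of_le fun i _ => (hyp i).length_le).1
      (total_length_le.antisymm' (Finset.sum_le_sum fun i _ => (hyp i).length_le))
  exact funext fun i => (hyp i).eq_of_length (length_eq i (Finset.mem_univ i))

theorem InitCode.domC_eq (hC : InitCode C) (hf : f.Dom = rIdeal C) : domC f = C := by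
  have hCdom : C ⊆ f.Dom := fun s hs => hf.superset ⟨s, hs, _, (cat_nil s).symm⟩
  ext x
  constructor
  · rintro ⟨hx, hmin⟩
    obtain ⟨s, hs, v, rfl⟩ := hf.subset hx
    exact hmin s (hCdom hs) (initLE_cat s v) ▸ hs
  · refine fun hx => ⟨hCdom hx, fun y hy hyx => ?_⟩
    obtain ⟨s, hs, v, rfl⟩ := hf.subset hy
    have hsx : s = x := hC s hs x hx fun i => (initLE_cat s v i).trans (hyx i)
    subst hsx
    exact funext fun i => (hyx i).eq_of_length_le (initLE_cat s v i).length_le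

theorem exists_isRIM_of_joinless (hC : Joinless C) (g : (Fin n → List A) → Fin n → List A) :
    ∃ f, IsRIM f ∧ domC f = C ∧ ∀ s ∈ C, g s ∈ f s := by
  have rightUnique : Relator.RightUnique
      fun x y => ∃ s ∈ C, ∃ v, x = cat s v ∧ y = cat (g s) v := by
    rintro x _ _ ⟨s, hs, v, hx, rfl⟩ ⟨t, ht, w, hx', rfl⟩
    obtain rfl := hC.eq_of_joinEx hs ht
      (joinEx_of_initLE (hx ▸ initLE_cat s v) (hx' ▸ initLE_cat t w))
    rw [cat_right_injective s (hx.symm.trans hx')]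
  obtain ⟨f, hf⟩ := exists_pfun_mem_iff rightUnique
  refine ⟨f, fun x y hxy w => ?_, hC.initCode.domC_eq ?_, fun s hs => ?_⟩
  · obtain ⟨s, hs, v, rfl, rfl⟩ := (hf x y).1 hxy
    exact (hf _ _).2 ⟨s, hs, cat v w, cat_assoc _ _ _, cat_assoc _ _ _⟩
  · ext x
    simp only [PFun.mem_dom, hf, rIdeal, Set.mem_ofPred_eq]
    constructor
    · rintro ⟨_, s, hs, v, hx, _⟩
      exact ⟨s, hs, v, hx⟩
    · rintro ⟨s, hs, v, hx⟩
      exact ⟨_, s, hs, v, hx, rfl⟩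
  · exact (hf _ _).2 ⟨s, hs, _, (cat_nil s).symm, (cat_nil (g s)).symm⟩

end RightIdealMorphisms

section Extensions

variable {f : (Fin n → List A) →. (Fin n → List A)} {Φ : (Fin n → Stream' A) →. (Fin n → Stream' A)}

theorem exists_isExt_of_joinless_domC (hf : Joinless (domC f)) : ∃ Φ, IsExt f Φ := by
  have rightUnique : Relator.RightUnique fun x z =>
      ∃ p ∈ domC f, ∃ y ∈ f p, ∃ u, x = catOmega p u ∧ z = catOmega y u := by
    rintro x _ _ ⟨p, hp, y, hy, u, hx, rfl⟩ ⟨q, hq, z, hz, v, hx', rfl⟩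
    obtain rfl := hf.eq_of_joinEx hp hq (joinEx_of_catOmega_eq (hx.symm.trans hx'))
    rw [Part.mem_unique hy hz, catOmega_right_injective p (hx.symm.trans hx')]
  obtain ⟨Φ, hΦ⟩ := exists_pfun_mem_iff rightUnique
  refine ⟨Φ, ?_, fun p hp u y hy => (hΦ _ _).2 ⟨p, hp, y, hy, u, rfl, rfl⟩⟩
  ext x
  simp only [PFun.mem_dom, hΦ, omegaIdeal, Set.mem_ofPred_eq]
  constructor
  · rintro ⟨_, p, hp, _, _, u, hx, _⟩
    exact ⟨p, hp, u, hx⟩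
  · rintro ⟨p, hp, u, hx⟩
    obtain ⟨y, hy⟩ := (PFun.mem_dom f p).1 hp.1
    exact ⟨_, p, hp, y, hy, u, hx, rfl⟩

theorem IsExt.catOmega_mem (hΦ : IsExt f Φ) (hf : IsRIM f) {x y : Fin n → List A}
    (hxy : y ∈ f x) (u : Fin n → Stream' A) : catOmega y u ∈ Φ (catOmega x u) := by
  obtain ⟨p, hp, v, rfl⟩ := dom_subset_rIdeal_domC f ((PFun.mem_dom f x).2 ⟨y, hxy⟩)
  obtain ⟨q, hq⟩ := (PFun.mem_dom f p).1 hp.1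
  obtain rfl : y = cat q v := Part.mem_unique hxy (hf p q hq v)
  rw [catOmega_cat, catOmega_cat]
  exact hΦ.2 p hp _ q hq

theorem IsExt.ran_subset_omegaIdeal_image (hΦ : IsExt f Φ) :
    Φ.ran ⊆ omegaIdeal (f.image (domC f)) := by
  rintro z ⟨x, hxz⟩
  obtain ⟨p, hp, u, rfl⟩ := hΦ.1.subset ((PFun.mem_dom Φ x).2 ⟨z, hxz⟩)
  obtain ⟨q, hq⟩ := (PFun.mem_dom f p).1 hp.1
  exact ⟨q, ⟨p, hp, hq⟩, u, Part.mem_unique hxz (hΦ.2 p hp u q hq)⟩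

theorem IsExt.ran_subset_omegaIdeal_ran (hΦ : IsExt f Φ) (hf : IsRIM f) {N : ℕ}
    (hN : ∀ q ∈ f.image (domC f), ∀ i, (q i).length ≤ N) :
    Φ.ran ⊆ omegaIdeal {y ∈ f.ran | ∀ i, (y i).length = N} := by
  intro z hz
  obtain ⟨q, hq, u, rfl⟩ := hΦ.ran_subset_omegaIdeal_image hz
  obtain ⟨v, u', hlen, hqu⟩ := exists_catOmega_eq_of_length_le (hN q hq) u
  obtain ⟨p, -, hpq⟩ := hq
  exact ⟨cat q v, ⟨⟨cat p v, hf p q hpq v⟩, hlen⟩, u', hqu.symm⟩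

end Extensions

/-- The monoid `nM_{k,1}` is regular: every `Φ ∈ nM_{k,1}` has `Φ' ∈ nM_{k,1}`
with `Φ ∘ Φ' ∘ Φ = Φ`. -/
theorem stmt_19 (n k : ℕ) (hn : 1 ≤ n) (hk : 2 ≤ k)
    (A : Type*) [Fintype A] (hcard : Fintype.card A = k)
    (Φ : (Fin n → Stream' A) →. (Fin n → Stream' A)) (hΦ : InNM Φ) :
    ∃ Φ' : (Fin n → Stream' A) →. (Fin n → Stream' A),
      InNM Φ' ∧ Φ.comp (Φ'.comp Φ) = Φ := by
  obtain ⟨f, hf, hfin, -, hfΦ⟩ := hΦ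
  obtain ⟨N, hN⟩ := exists_forall_length_le (finite_pfun_image f hfin)
  let C : Set (Fin n → List A) := {y ∈ f.ran | ∀ i, (y i).length = N}
  have C_finite : C.Finite := (finite_setOf_forall_length_eq N).subset fun _ hy => hy.2
  have C_joinless : Joinless C := joinless_of_forall_length_eq fun _ hy => hy.2
  have exists_preimage : ∀ y ∈ C, ∃ x, y ∈ f x := fun _ hy => hy.1
  choose! g hg using exists_preimage
  obtain ⟨f', hf', domC_eq, hgf'⟩ := exists_isRIM_of_joinless C_joinless g
  rw [← domC_eq] at C_finite C_joinless
  obtain ⟨Φ', hf'Φ'⟩ := exists_isExt_of_joinless_domC C_joinless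
  refine ⟨Φ', ⟨f', hf', C_finite, C_joinless, hf'Φ'⟩, pfun_comp_comp_eq_self fun z hz => ?_⟩
  obtain ⟨y, hy, u, rfl⟩ := hfΦ.ran_subset_omegaIdeal_ran hf hN hz
  exact ⟨catOmega (g y) u, hf'Φ'.catOmega_mem hf' (hgf' y hy) u, hfΦ.catOmega_mem hf (hg y hy) u⟩
end
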